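/- In the finite-dimensional design setup, assume m ≥ 2, let ℓ_m be the m-th row of O and let O₋ be the matrix of the first m−1 rows of O. Then Φ(O) − Φ(O₋) = (1/2) * Real.log ( 1 + N / D ), where N := ⟪F * Γpost(O₋) * Fᵀ applied to (O₋ᵀ * Σ(O₋)⁻¹ * O₋ * Γ' − 1) ℓ_m , (O₋ᵀ * Σ(O₋)⁻¹ * O₋ * Γ' − 1) ℓ_m⟫ (Euclidean inner product on ℝ^p) and D := σ² + ℓ_mᵀ Γ' ℓ_m − ℓ_mᵀ Γ' O₋ᵀ Σ(O₋)⁻¹ O₋ Γ' ℓ_m. -/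

import Mathlib

open Matrix

/-- Noise covariance `Σ(O) = O Γ' Oᵀ + σ² I` of the design `O`. -/
noncomputable def SigM {m p : ℕ} (Γ' : Matrix (Fin p) (Fin p) ℝ) (σ : ℝ)
    (O : Matrix (Fin m) (Fin p) ℝ) : Matrix (Fin m) (Fin m) ℝ :=
  O * Γ' * Oᵀ + σ ^ 2 • 1

/-- Posterior covariance `Γpost(O) = (Γ⁻¹ + Fᵀ Oᵀ Σ(O)⁻¹ O F)⁻¹`. -/
noncomputable def Gpost {n m p : ℕ} (Γ : Matrix (Fin n) (Fin n) ℝ)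
    (F : Matrix (Fin p) (Fin n) ℝ) (Γ' : Matrix (Fin p) (Fin p) ℝ) (σ : ℝ)
    (O : Matrix (Fin m) (Fin p) ℝ) : Matrix (Fin n) (Fin n) ℝ :=
  (Γ⁻¹ + Fᵀ * Oᵀ * (SigM Γ' σ O)⁻¹ * O * F)⁻¹

/-- The D-optimal design objective
`Φ(O) = ½ log det (I + Γ^{1/2} Fᵀ Oᵀ Σ(O)⁻¹ O F Γ^{1/2})`. -/
noncomputable def Phi {n m p : ℕ} (Γhalf : Matrix (Fin n) (Fin n) ℝ)
    (F : Matrix (Fin p) (Fin n) ℝ) (Γ' : Matrix (Fin p) (Fin p) ℝ) (σ : ℝ)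
    (O : Matrix (Fin m) (Fin p) ℝ) : ℝ :=
  (1 / 2) * Real.log (Matrix.det (1 + Γhalf * Fᵀ * Oᵀ * (SigM Γ' σ O)⁻¹ * O * F * Γhalf))

/-!
Since `det (1 + A B) = det (1 + B A)`, the determinant in `Φ(O)` is `det Γ` times that of the
posterior precision `Γ⁻¹ + Fᵀ J(O) F`, where `J(O) = Oᵀ Σ(O)⁻¹ O`. Appending rows `O₂` to `O₁`
borders `Σ(O₁)`; let `S` be the Schur complement of `Σ(O₁)` in the bordered matrix, the covariance
of the new noise conditional on the old. Block elimination gives `J(O) = J(O₁) + X S⁻¹ Xᵀ` with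
`X = (J(O₁) Γ' - 1) O₂ᵀ`, so the posterior precision undergoes an update whose rank is at most the
number of new rows, and `det (A + U V) = det A * det (1 + V A⁻¹ U)` evaluates the quotient of the
two determinants.
-/

theorem fromCols_mul_inv_fromBlocks_mul_fromRows {R m n k l : Type*} [CommRing R]
    [Fintype m] [DecidableEq m] [Fintype n] [DecidableEq n]
    {A : Matrix m m R} {B : Matrix m n R} {C : Matrix n m R} {D : Matrix n n R}
    (hA : IsUnit A) (hM : IsUnit (fromBlocks A B C D))
    (P : Matrix k m R) (Q : Matrix k n R) (U : Matrix m l R) (V : Matrix n l R) :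
    fromCols P Q * (fromBlocks A B C D)⁻¹ * fromRows U V =
      P * A⁻¹ * U + (P * A⁻¹ * B - Q) * (D - C * A⁻¹ * B)⁻¹ * (C * A⁻¹ * U - V) := by
  let := hA.invertible
  let := hM.invertible
  let := (isUnit_fromBlocks_iff_of_invertible₁₁.mp hM).invertible
  simp only [← invOf_eq_nonsing_inv]
  rw [invOf_fromBlocks₁₁_eq, fromCols_mul_fromBlocks, fromCols_mul_fromRows]
  simp only [Matrix.mul_add, Matrix.add_mul, Matrix.mul_sub, Matrix.sub_mul, Matrix.mul_neg,
    Matrix.neg_mul, Matrix.mul_assoc]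
  abel

theorem det_one_add_inv_mul_of_unique {ι K : Type*} [Unique ι] [Fintype ι] [DecidableEq ι]
    [Field K] (A B : Matrix ι ι K) :
    (1 + A⁻¹ * B).det = 1 + B default default / A default default := by
  simp [det_unique, inv_subsingleton, div_eq_inv_mul]

theorem replicateRow_mul_mul_replicateCol_apply {R ι κ m n : Type*} [NonUnitalSemiring R]
    [Fintype m] [Fintype n] (v : m → R) (M : Matrix m n R) (w : n → R) (i : ι) (j : κ) :
    (replicateRow ι v * M * replicateCol κ w) i j = v ⬝ᵥ M *ᵥ w := by
  rw [Matrix.mul_assoc, ← replicateCol_mulVec]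
  rfl

section Design

variable {n m k p : ℕ}

/-- The information matrix `J(O) = Oᵀ Σ(O)⁻¹ O` that the design `O` carries about the model output
`F u ∈ ℝᵖ`. -/
noncomputable def infoMatrix (Γ' : Matrix (Fin p) (Fin p) ℝ) (σ : ℝ)
    (O : Matrix (Fin m) (Fin p) ℝ) : Matrix (Fin p) (Fin p) ℝ :=
  Oᵀ * (SigM Γ' σ O)⁻¹ * O

/-- The posterior precision `Γ⁻¹ + Fᵀ J(O) F`, the matrix whose inverse is `Γpost(O)`. -/
noncomputable def postPrecision (Γ : Matrix (Fin n) (Fin n) ℝ) (F : Matrix (Fin p) (Fin n) ℝ)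
    (Γ' : Matrix (Fin p) (Fin p) ℝ) (σ : ℝ) (O : Matrix (Fin m) (Fin p) ℝ) :
    Matrix (Fin n) (Fin n) ℝ :=
  Γ⁻¹ + Fᵀ * infoMatrix Γ' σ O * F

/-- The covariance of the noise in the measurements `O₂` conditional on the noise in the
measurements `O₁`, i.e. the Schur complement of `Σ(O₁)` in the joint noise covariance. -/
noncomputable def condSigM (Γ' : Matrix (Fin p) (Fin p) ℝ) (σ : ℝ)
    (O₁ : Matrix (Fin m) (Fin p) ℝ) (O₂ : Matrix (Fin k) (Fin p) ℝ) :
    Matrix (Fin k) (Fin k) ℝ :=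
  SigM Γ' σ O₂ - O₂ * Γ' * infoMatrix Γ' σ O₁ * Γ' * O₂ᵀ

/-- The matrix `X = (J(O₁) Γ' - 1) O₂ᵀ`: minus the transpose of what is left of the design `O₂` once
the best linear prediction of its noise from that of `O₁` has been subtracted. Sign and
transpose are chosen so that a single row `ℓ` yields the column `(J(O₁) Γ' - 1) ℓ`. -/
noncomputable def residualDesign (Γ' : Matrix (Fin p) (Fin p) ℝ) (σ : ℝ)
    (O₁ : Matrix (Fin m) (Fin p) ℝ) (O₂ : Matrix (Fin k) (Fin p) ℝ) :
    Matrix (Fin p) (Fin k) ℝ :=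
  (infoMatrix Γ' σ O₁ * Γ' - 1) * O₂ᵀ

theorem Gpost_eq_inv_postPrecision (Γ : Matrix (Fin n) (Fin n) ℝ) (F : Matrix (Fin p) (Fin n) ℝ)
    (Γ' : Matrix (Fin p) (Fin p) ℝ) (σ : ℝ) (O : Matrix (Fin m) (Fin p) ℝ) :
    Gpost Γ F Γ' σ O = (postPrecision Γ F Γ' σ O)⁻¹ := by
  simp only [Gpost, postPrecision, infoMatrix, Matrix.mul_assoc]

variable {Γ Γhalf : Matrix (Fin n) (Fin n) ℝ} {Γ' : Matrix (Fin p) (Fin p) ℝ} {σ : ℝ}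

theorem posDef_SigM (hΓ' : Γ'.PosSemidef) (hσ : σ ≠ 0) (O : Matrix (Fin m) (Fin p) ℝ) :
    (SigM Γ' σ O).PosDef := by
  have h_model : (O * Γ' * Oᵀ).PosSemidef := by simpa using hΓ'.mul_mul_conjTranspose_same O
  exact PosDef.posSemidef_add h_model (PosDef.one.smul (by positivity))

theorem posDef_postPrecision (hΓ : Γ.PosDef) (F : Matrix (Fin p) (Fin n) ℝ)
    {O : Matrix (Fin m) (Fin p) ℝ} (hS : (SigM Γ' σ O).PosDef) :
    (postPrecision Γ F Γ' σ O).PosDef := by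
  refine hΓ.inv.add_posSemidef ?_
  simpa [infoMatrix, Matrix.mul_assoc] using
    hS.inv.posSemidef.conjTranspose_mul_mul_same (O * F)

theorem Phi_eq_log_det_mul_det_postPrecision (hΓ : IsUnit Γ) (hsq : Γhalf * Γhalf = Γ)
    (F : Matrix (Fin p) (Fin n) ℝ) (O : Matrix (Fin m) (Fin p) ℝ) :
    Phi Γhalf F Γ' σ O = 1 / 2 * Real.log (Γ.det * (postPrecision Γ F Γ' σ O).det) := by
  have hdet : IsUnit Γ.det := (isUnit_iff_isUnit_det Γ).mp hΓ
  have h_cyclic : (1 + Γhalf * Fᵀ * Oᵀ * (SigM Γ' σ O)⁻¹ * O * F * Γhalf).det =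
      (1 + Γ * (Fᵀ * infoMatrix Γ' σ O * F)).det := by
    rw [det_one_add_mul_comm, ← hsq]
    simp only [infoMatrix, Matrix.mul_assoc]
  rw [Phi, h_cyclic, ← det_mul, postPrecision, Matrix.mul_add, mul_nonsing_inv Γ hdet]

theorem Phi_sub_Phi_eq_log_det_div_det (hΓ : Γ.PosDef) (hsq : Γhalf * Γhalf = Γ)
    (F : Matrix (Fin p) (Fin n) ℝ) {O : Matrix (Fin m) (Fin p) ℝ} {O' : Matrix (Fin k) (Fin p) ℝ}
    (hS : (SigM Γ' σ O).PosDef) (hS' : (SigM Γ' σ O').PosDef) :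
    Phi Γhalf F Γ' σ O - Phi Γhalf F Γ' σ O' =
      1 / 2 * Real.log ((postPrecision Γ F Γ' σ O).det / (postPrecision Γ F Γ' σ O').det) := by
  have hdet : (postPrecision Γ F Γ' σ O).det ≠ 0 := (posDef_postPrecision hΓ F hS).det_pos.ne'
  have hdet' : (postPrecision Γ F Γ' σ O').det ≠ 0 := (posDef_postPrecision hΓ F hS').det_pos.ne'
  rw [Phi_eq_log_det_mul_det_postPrecision hΓ.isUnit hsq,
    Phi_eq_log_det_mul_det_postPrecision hΓ.isUnit hsq, Real.log_mul hΓ.det_pos.ne' hdet,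
    Real.log_mul hΓ.det_pos.ne' hdet', Real.log_div hdet hdet']
  ring

/-- The design consisting of the measurements `O₁` followed by the measurements `O₂`. -/
def appendRows (O₁ : Matrix (Fin m) (Fin p) ℝ) (O₂ : Matrix (Fin k) (Fin p) ℝ) :
    Matrix (Fin (m + k)) (Fin p) ℝ :=
  (fromRows O₁ O₂).submatrix finSumFinEquiv.symm id

theorem eq_appendRows_replicateRow (O : Matrix (Fin (m + 1)) (Fin p) ℝ) :
    O = appendRows (O.submatrix Fin.castSucc id) (replicateRow (Fin 1) (O (Fin.last m))) := by
  ext i j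
  refine Fin.lastCases ?_ (fun i => ?_) i <;> simp [appendRows]

variable {O₁ : Matrix (Fin m) (Fin p) ℝ} {O₂ : Matrix (Fin k) (Fin p) ℝ}

theorem SigM_appendRows :
    SigM Γ' σ (appendRows O₁ O₂) =
      (fromBlocks (SigM Γ' σ O₁) (O₁ * Γ' * O₂ᵀ) (O₂ * Γ' * O₁ᵀ) (SigM Γ' σ O₂)).submatrix
        finSumFinEquiv.symm finSumFinEquiv.symm := by
  have h_stacked : SigM Γ' σ (appendRows O₁ O₂) =
      (fromRows O₁ O₂ * Γ' * (fromRows O₁ O₂)ᵀ + σ ^ 2 • 1).submatrix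
        finSumFinEquiv.symm finSumFinEquiv.symm := by
    simp only [SigM, appendRows, transpose_submatrix, submatrix_add, submatrix_smul, Pi.add_apply,
      Pi.smul_apply, submatrix_one_equiv, submatrix_mul _ _ _ id _ Function.bijective_id,
      submatrix_id_id]
  rw [h_stacked, transpose_fromRows, fromRows_mul, fromRows_mul_fromCols, ← fromBlocks_one,
    fromBlocks_smul, fromBlocks_add]
  simp only [SigM, smul_zero, add_zero]

theorem posDef_SigM_of_appendRows (hS : (SigM Γ' σ (appendRows O₁ O₂)).PosDef) :
    (SigM Γ' σ O₁).PosDef := by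
  rw [SigM_appendRows] at hS
  have h_blocks := hS.submatrix finSumFinEquiv.injective
  rw [submatrix_submatrix, Equiv.symm_comp_self, submatrix_id_id] at h_blocks
  exact h_blocks.submatrix Sum.inl_injective

theorem isSymm_infoMatrix (hΓ' : Γ'.IsSymm) (O : Matrix (Fin m) (Fin p) ℝ) :
    (infoMatrix Γ' σ O).IsSymm := by
  simp [IsSymm, infoMatrix, SigM, transpose_nonsing_inv, hΓ'.eq, Matrix.mul_assoc]

theorem infoMatrix_appendRows (hΓ' : Γ'.IsSymm) (hS₁ : IsUnit (SigM Γ' σ O₁))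
    (hS : IsUnit (SigM Γ' σ (appendRows O₁ O₂))) :
    infoMatrix Γ' σ (appendRows O₁ O₂) = infoMatrix Γ' σ O₁ +
      residualDesign Γ' σ O₁ O₂ * (condSigM Γ' σ O₁ O₂)⁻¹ * (residualDesign Γ' σ O₁ O₂)ᵀ := by
  have h_stacked : infoMatrix Γ' σ (appendRows O₁ O₂) =
      fromCols O₁ᵀ O₂ᵀ * (fromBlocks (SigM Γ' σ O₁) (O₁ * Γ' * O₂ᵀ) (O₂ * Γ' * O₁ᵀ)
        (SigM Γ' σ O₂))⁻¹ * fromRows O₁ O₂ := by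
    rw [infoMatrix, SigM_appendRows, inv_submatrix_equiv, appendRows, transpose_submatrix,
      submatrix_mul_equiv, submatrix_mul_equiv, submatrix_id_id, transpose_fromRows]
  have h_left : O₁ᵀ * (SigM Γ' σ O₁)⁻¹ * (O₁ * Γ' * O₂ᵀ) - O₂ᵀ = residualDesign Γ' σ O₁ O₂ := by
    simp only [residualDesign, infoMatrix, Matrix.sub_mul, Matrix.one_mul, Matrix.mul_assoc]
  have h_right : O₂ * Γ' * O₁ᵀ * (SigM Γ' σ O₁)⁻¹ * O₁ - O₂ = (residualDesign Γ' σ O₁ O₂)ᵀ := by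
    rw [residualDesign, transpose_mul, transpose_sub, transpose_mul, (isSymm_infoMatrix hΓ' O₁).eq,
      hΓ'.eq, transpose_transpose, transpose_one, Matrix.mul_sub, Matrix.mul_one]
    simp only [infoMatrix, Matrix.mul_assoc]
  have h_schur : SigM Γ' σ O₂ - O₂ * Γ' * O₁ᵀ * (SigM Γ' σ O₁)⁻¹ * (O₁ * Γ' * O₂ᵀ) =
      condSigM Γ' σ O₁ O₂ := by
    simp only [condSigM, infoMatrix, Matrix.mul_assoc]
  rw [SigM_appendRows, isUnit_submatrix_equiv] at hS
  rw [h_stacked, fromCols_mul_inv_fromBlocks_mul_fromRows hS₁ hS, h_left, h_right, h_schur,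
    infoMatrix]

theorem det_postPrecision_appendRows (hΓ' : Γ'.IsSymm) (F : Matrix (Fin p) (Fin n) ℝ)
    (hS₁ : IsUnit (SigM Γ' σ O₁)) (hS : IsUnit (SigM Γ' σ (appendRows O₁ O₂)))
    (hdet : (postPrecision Γ F Γ' σ O₁).det ≠ 0) :
    (postPrecision Γ F Γ' σ (appendRows O₁ O₂)).det = (postPrecision Γ F Γ' σ O₁).det *
      (1 + (condSigM Γ' σ O₁ O₂)⁻¹ * ((residualDesign Γ' σ O₁ O₂)ᵀ *
        (F * Gpost Γ F Γ' σ O₁ * Fᵀ) * residualDesign Γ' σ O₁ O₂)).det := by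
  set X := residualDesign Γ' σ O₁ O₂ with hX
  have h_update : postPrecision Γ F Γ' σ (appendRows O₁ O₂) =
      postPrecision Γ F Γ' σ O₁ + (Fᵀ * X) * ((condSigM Γ' σ O₁ O₂)⁻¹ * Xᵀ * F) := by
    rw [postPrecision, infoMatrix_appendRows hΓ' hS₁ hS, ← hX, postPrecision]
    simp only [Matrix.mul_add, Matrix.add_mul, Matrix.mul_assoc, add_assoc]
  rw [h_update, det_add_mul _ _ hdet.isUnit, Gpost_eq_inv_postPrecision]
  simp only [Matrix.mul_assoc]

theorem Phi_appendRows_sub_Phi (hΓ : Γ.PosDef) (hsq : Γhalf * Γhalf = Γ) (hΓ' : Γ'.IsSymm)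
    (F : Matrix (Fin p) (Fin n) ℝ) (hS : (SigM Γ' σ (appendRows O₁ O₂)).PosDef) :
    Phi Γhalf F Γ' σ (appendRows O₁ O₂) - Phi Γhalf F Γ' σ O₁ =
      1 / 2 * Real.log (1 + (condSigM Γ' σ O₁ O₂)⁻¹ * ((residualDesign Γ' σ O₁ O₂)ᵀ *
        (F * Gpost Γ F Γ' σ O₁ * Fᵀ) * residualDesign Γ' σ O₁ O₂)).det := by
  have hS₁ : (SigM Γ' σ O₁).PosDef := posDef_SigM_of_appendRows hS
  have hdet : (postPrecision Γ F Γ' σ O₁).det ≠ 0 := (posDef_postPrecision hΓ F hS₁).det_pos.ne'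
  rw [Phi_sub_Phi_eq_log_det_div_det hΓ hsq F hS hS₁,
    det_postPrecision_appendRows hΓ' F hS₁.isUnit hS.isUnit hdet, mul_div_cancel_left₀ _ hdet]

theorem residualDesign_replicateRow (ℓ : Fin p → ℝ) :
    residualDesign Γ' σ O₁ (replicateRow (Fin k) ℓ) =
      replicateCol (Fin k) ((infoMatrix Γ' σ O₁ * Γ' - 1) *ᵥ ℓ) := by
  rw [residualDesign, transpose_replicateRow, replicateCol_mulVec]

theorem condSigM_replicateRow_apply_self (ℓ : Fin p → ℝ) (i : Fin k) :
    condSigM Γ' σ O₁ (replicateRow (Fin k) ℓ) i i =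
      σ ^ 2 + ℓ ⬝ᵥ Γ' *ᵥ ℓ - ℓ ⬝ᵥ (Γ' * infoMatrix Γ' σ O₁ * Γ') *ᵥ ℓ := by
  have h_model : replicateRow (Fin k) ℓ * Γ' * infoMatrix Γ' σ O₁ * Γ' * (replicateRow (Fin k) ℓ)ᵀ =
      replicateRow (Fin k) ℓ * (Γ' * infoMatrix Γ' σ O₁ * Γ') * replicateCol (Fin k) ℓ := by
    simp only [transpose_replicateRow, Matrix.mul_assoc]
  rw [condSigM, h_model, SigM, transpose_replicateRow, Matrix.sub_apply, Matrix.add_apply,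
    replicateRow_mul_mul_replicateCol_apply, replicateRow_mul_mul_replicateCol_apply,
    Matrix.smul_apply, one_apply_eq, smul_eq_mul, mul_one, add_comm (σ ^ 2)]

end Design

theorem design_increase_due_to_measurement_general
    (n p m : ℕ)
    (Γ Γhalf : Matrix (Fin n) (Fin n) ℝ) (hΓ : Γ.PosDef) (hsq : Γhalf * Γhalf = Γ)
    (F : Matrix (Fin p) (Fin n) ℝ)
    (Γ' : Matrix (Fin p) (Fin p) ℝ) (hΓ' : Γ'.IsSymm)
    (σ : ℝ)
    (O : Matrix (Fin (m + 1)) (Fin p) ℝ) (hS : (SigM Γ' σ O).PosDef)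
    (Om : Matrix (Fin m) (Fin p) ℝ) (hOm : Om = O.submatrix Fin.castSucc id)
    (ℓ : Fin p → ℝ) (hℓ : ℓ = O (Fin.last m))
    (x : Fin p → ℝ) (hx : x = (Omᵀ * (SigM Γ' σ Om)⁻¹ * Om * Γ' - 1).mulVec ℓ) :
    Phi Γhalf F Γ' σ O - Phi Γhalf F Γ' σ Om =
      (1 / 2) * Real.log (1 +
        ((F * Gpost Γ F Γ' σ Om * Fᵀ).mulVec x ⬝ᵥ x) /
        (σ ^ 2 + ℓ ⬝ᵥ Γ'.mulVec ℓ -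
          ℓ ⬝ᵥ (Γ' * Omᵀ * (SigM Γ' σ Om)⁻¹ * Om * Γ').mulVec ℓ)) := by
  have hO : O = appendRows Om (replicateRow (Fin 1) ℓ) := by
    rw [hOm, hℓ, ← eq_appendRows_replicateRow]
  have h_residual : residualDesign Γ' σ Om (replicateRow (Fin 1) ℓ) = replicateCol (Fin 1) x := by
    rw [residualDesign_replicateRow, hx, infoMatrix]
  have h_middle : Γ' * Omᵀ * (SigM Γ' σ Om)⁻¹ * Om * Γ' = Γ' * infoMatrix Γ' σ Om * Γ' := by
    simp only [infoMatrix, Matrix.mul_assoc]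
  rw [hO] at hS
  rw [hO, Phi_appendRows_sub_Phi hΓ hsq hΓ' F hS, det_one_add_inv_mul_of_unique, h_residual,
    transpose_replicateCol, replicateRow_mul_mul_replicateCol_apply, dotProduct_comm,
    condSigM_replicateRow_apply_self, h_middle]

/-- Increase in the design objective due to the last measurement (`m+1` rows in total,
`O₋` the first `m` rows, `ℓ` the last row). -/
theorem design_increase_due_to_measurement
    (n p m : ℕ) (hn : 0 < n) (hp : 0 < p) (hm : 1 ≤ m)
    (Γ Γhalf : Matrix (Fin n) (Fin n) ℝ) (hΓ : Γ.PosDef) (hΓhalf : Γhalf.PosDef)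
    (hsq : Γhalf * Γhalf = Γ)
    (F : Matrix (Fin p) (Fin n) ℝ)
    (Γ' : Matrix (Fin p) (Fin p) ℝ) (hΓ' : Γ'.PosSemidef)
    (σ : ℝ) (hσ : 0 < σ)
    (O : Matrix (Fin (m + 1)) (Fin p) ℝ)
    (Om : Matrix (Fin m) (Fin p) ℝ) (hOm : Om = O.submatrix Fin.castSucc id)
    (ℓ : Fin p → ℝ) (hℓ : ℓ = O (Fin.last m))
    (x : Fin p → ℝ) (hx : x = (Omᵀ * (SigM Γ' σ Om)⁻¹ * Om * Γ' - 1).mulVec ℓ) :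
    Phi Γhalf F Γ' σ O - Phi Γhalf F Γ' σ Om =
      (1 / 2) * Real.log (1 +
        ((F * Gpost Γ F Γ' σ Om * Fᵀ).mulVec x ⬝ᵥ x) /
        (σ ^ 2 + ℓ ⬝ᵥ Γ'.mulVec ℓ -
          ℓ ⬝ᵥ (Γ' * Omᵀ * (SigM Γ' σ Om)⁻¹ * Om * Γ').mulVec ℓ)) := by
  exact design_increase_due_to_measurement_general n p m Γ Γhalf hΓ hsq F Γ'
    (isHermitian_iff_isSymm.mp hΓ'.isHermitian) σ O (posDef_SigM hΓ' hσ.ne' O) Om hOm ℓ hℓ x hx
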